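/- Let K n denote the number of neutral head normal forms of size n. Then K 1 = 1 and, for every n ≥ 1, K (n+1) = L n, where L n is the number of lambda terms of size n. -/

import Mathlib

/-- Lambda terms with de Bruijn indices. -/
inductive Term : Type
  | var : ℕ → Term
  | app : Term → Term → Term
  | abs : Term → Term

namespace Term

/-- Natural size: every operator (zero, successor, application, abstraction) has size 1. -/
def size : Term → ℕ
  | var k => k + 1
  | app M N => M.size + N.size + 1
  | abs M => M.size + 1

end Term

/-- `L n` is the number of lambda terms of size `n`. -/
noncomputable def L (n : ℕ) : ℕ := Nat.card {t : Term // t.size = n}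


/-- Neutral head normal forms: terms of the form `app (app … (app (var k) N₁) …) N_p`
with `p ≥ 0` and arbitrary terms `N₁, …, N_p`. -/
inductive IsNeutralHnf : Term → Prop
  | var (k : ℕ) : IsNeutralHnf (Term.var k)
  | app {m : Term} (n : Term) : IsNeutralHnf m → IsNeutralHnf (Term.app m n)

/-- `K n` is the number of neutral head normal forms of size `n`. -/
noncomputable def K (n : ℕ) : ℕ := Nat.card {t : Term // IsNeutralHnf t ∧ t.size = n}

/-!
A term is a spine of applications `M N₁ … N_p` whose head `M` is a variable or an abstraction.
Replacing a head `var k` by `var (k + 1)` and a head `abs M` by `app (var 0) M` raises the size by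
one and produces every neutral head normal form except `var 0` exactly once: the head variable of
the result is `0` only in the second case, so `M` can be recovered. The exception `var 0` is the
only term of size one.
-/

namespace Term

/-- The bijection from terms to neutral head normal forms other than `var 0`, which acts on the
head of the term only and raises the size by one. -/
def toNeutralHnf : Term → Term
  | var k => var (k + 1)
  | app M N => app M.toNeutralHnf N
  | abs M => app (var 0) M

theorem isNeutralHnf_toNeutralHnf (t : Term) : IsNeutralHnf t.toNeutralHnf := by
  induction t with
  | var k => exact .var (k + 1)
  | app M N ihM _ => exact .app N ihM
  | abs M _ => exact .app M (.var 0)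

theorem size_toNeutralHnf (t : Term) : t.toNeutralHnf.size = t.size + 1 := by
  induction t with
  | var k => rfl
  | app M N ihM _ => simp only [toNeutralHnf, size, ihM]; omega
  | abs M _ => simp only [toNeutralHnf, size]; omega

theorem toNeutralHnf_ne_var_zero (t : Term) : t.toNeutralHnf ≠ var 0 := by
  cases t <;> simp [toNeutralHnf]

theorem toNeutralHnf_injective : Function.Injective toNeutralHnf := by
  intro s t h
  induction s generalizing t with
  | var k => cases t <;> simp_all [toNeutralHnf]
  | app M N ihM _ =>
    cases t with
    | var k => simp [toNeutralHnf] at h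
    | app M' N' =>
      obtain ⟨hM, rfl⟩ := app.inj h
      rw [ihM hM]
    | abs M' => exact absurd (app.inj h).1 M.toNeutralHnf_ne_var_zero
  | abs M _ =>
    cases t with
    | var k => simp [toNeutralHnf] at h
    | app M' N' => exact absurd (app.inj h).1.symm M'.toNeutralHnf_ne_var_zero
    | abs M' => rw [(app.inj h).2]

theorem eq_var_zero_or_mem_range_toNeutralHnf {t : Term} (ht : IsNeutralHnf t) :
    t = var 0 ∨ t ∈ Set.range toNeutralHnf := by
  induction ht with
  | var k =>
    cases k with
    | zero => exact .inl rfl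
    | succ k => exact .inr ⟨var k, rfl⟩
  | app N _ ih =>
    rcases ih with rfl | ⟨s, rfl⟩
    · exact .inr ⟨abs N, rfl⟩
    · exact .inr ⟨app s N, rfl⟩

theorem range_toNeutralHnf : Set.range toNeutralHnf = {t | IsNeutralHnf t ∧ t ≠ var 0} := by
  ext t
  constructor
  · rintro ⟨s, rfl⟩
    exact ⟨s.isNeutralHnf_toNeutralHnf, s.toNeutralHnf_ne_var_zero⟩
  · rintro ⟨ht, hne⟩
    exact (eq_var_zero_or_mem_range_toNeutralHnf ht).resolve_left hne

theorem size_pos (t : Term) : 0 < t.size := by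
  cases t <;> simp [size]

theorem size_eq_one_iff {t : Term} : t.size = 1 ↔ t = var 0 := by
  cases t with
  | var k => simp [size]
  | app M N => simp [size, M.size_pos.ne']
  | abs M => simp [size, M.size_pos.ne']

theorem image_toNeutralHnf_size_eq {n : ℕ} (hn : n ≠ 0) :
    toNeutralHnf '' {t | t.size = n} = {t | IsNeutralHnf t ∧ t.size = n + 1} := by
  have preimage_eq : {t | t.size = n} = toNeutralHnf ⁻¹' {t | t.size = n + 1} := by
    ext t
    simp [size_toNeutralHnf]
  rw [preimage_eq, Set.image_preimage_eq_inter_range, range_toNeutralHnf]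
  ext t
  have ne_var_zero (ht : t.size = n + 1) : t ≠ var 0 := by
    rw [ne_eq, ← size_eq_one_iff]
    omega
  simp only [Set.mem_inter_iff, Set.mem_ofPred_eq]
  tauto

end Term

theorem K_one : K 1 = 1 := by
  have eq_singleton : {t : Term | IsNeutralHnf t ∧ t.size = 1} = {Term.var 0} := by
    ext t
    simp only [Term.size_eq_one_iff, Set.mem_ofPred_eq, Set.mem_singleton_iff,
      and_iff_right_iff_imp]
    rintro rfl
    exact .var 0
  calc
    K 1 = Nat.card {t : Term | IsNeutralHnf t ∧ t.size = 1} := rfl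
    _ = 1 := by rw [eq_singleton, Nat.card_unique]

theorem K_succ {n : ℕ} (hn : n ≠ 0) : K (n + 1) = L n :=
  calc
    K (n + 1) = Nat.card {t : Term | IsNeutralHnf t ∧ t.size = n + 1} := rfl
    _ = Nat.card (Term.toNeutralHnf '' {t | t.size = n}) := by
      rw [Term.image_toNeutralHnf_size_eq hn]
    _ = L n := Nat.card_image_of_injective Term.toNeutralHnf_injective _

theorem K_eq_L :
    K 1 = 1 ∧ ∀ n : ℕ, 1 ≤ n → K (n + 1) = L n :=
  ⟨K_one, fun _ hn => K_succ (Nat.one_le_iff_ne_zero.mp hn)⟩
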